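/- arXiv:1211.2224 — 2 statements merged into one kernel-verified Lean document; each statement's English description precedes it below -/
import Mathlib

section
/- Let Ω = {(x₁,x₂) ∈ ℝ² : 0 < |x₂| < x₁ < h} be an isosceles right triangle with hypotenuse of length 2h, and let Γ = {x₁ = h, x₂ ∈ [−h,h]} be the hypotenuse. Then the sharp constant C₂(Ω,Γ) in the inequality ‖w‖_{L²(Γ)} ≤ C₂‖∇w‖_{L²(Ω)} for all w ∈ H̃¹(Ω,Γ) is equal to h^{1/2}. -/
open MeasureTheory Real

/-!
The part of `w` even in `y` and the part odd in `y` are orthogonal both in `L²` of the hypotenuse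
and in Dirichlet energy, so it is enough to prove the inequality with constant `h` on the half
triangle `0 < y < x < h`, for a function `u` which either vanishes on `y = 0` (odd part) or has mean
zero on the side `x = h` (even part).

Extending `u` evenly across the diagonal gives a symmetric function `v` on the square `[0, h]²`, and
the energy of `u` becomes `∫₀ʰ R t dt` with `R t = ∫₀ʰ (∂ₛ v s t)² ds`. By Cauchy–Schwarz
`(v h t - v s t)² ≤ (h - s) * R t`. In the odd case `v 0 t = 0`, and `s = 0` gives the claim after
integration in `t`. In the even case `v s t = v t s` joins `v h t` to `v h s`, so that
`(v h t - v h s)² ≤ 2 * (h - s) * R t + 2 * (h - t) * R s`, and integration over the square gives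
the claim because the mean vanishes. The function `x * y` is odd and attains equality.
-/

lemma sq_add_le_of_sq_le_mul {R : Type*} [CommRing R] [LinearOrder R] [IsStrictOrderedRing R]
    {α β k l X Y : R} (hk : 0 ≤ k) (hl : 0 ≤ l) (hX : 0 ≤ X)
    (hY : 0 ≤ Y) (hα : α ^ 2 ≤ k * X) (hβ : β ^ 2 ≤ l * Y) :
    (α + β) ^ 2 ≤ (k + l) * (X + Y) := by
  simpa using Finset.sum_sq_le_sum_mul_sum_of_sq_le_mul (r := ![α, β]) (f := ![k, l])
    (g := ![X, Y]) Finset.univ (by simp [Fin.forall_fin_two, *]) (by simp [Fin.forall_fin_two, *])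
    (by simp [Fin.forall_fin_two, *])

section IntervalIntegral

variable {a b h : ℝ}

lemma sq_intervalIntegral_le {g : ℝ → ℝ} (hab : a ≤ b) (hg : IntervalIntegrable g volume a b)
    (hg2 : IntervalIntegrable (fun x ↦ g x ^ 2) volume a b) :
    (∫ x in a..b, g x) ^ 2 ≤ (b - a) * ∫ x in a..b, g x ^ 2 := by
  rcases hab.eq_or_lt with rfl | hlt
  · simp
  have hlen : 0 < b - a := sub_pos.2 hlt
  have jensen : (⨍ x in a..b, g x) ^ 2 ≤ ⨍ x in a..b, g x ^ 2 := by
    rw [Set.uIoc_of_le hab]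
    exact (even_two.convexOn_pow (𝕜 := ℝ)).map_set_average_le (continuousOn_pow 2) isClosed_univ
      (by simpa using hlt) (by simp) (by simp) hg.1 hg2.1
  rw [interval_average_eq, interval_average_eq, smul_eq_mul, smul_eq_mul, mul_pow] at jensen
  field_simp at jensen
  exact jensen

lemma sq_sub_le_mul_integral_sq_deriv {f f' : ℝ → ℝ} (hab : a ≤ b)
    (hf : ∀ x, HasDerivAt f (f' x) x) (hf' : Continuous f') :
    (f b - f a) ^ 2 ≤ (b - a) * ∫ x in a..b, f' x ^ 2 := by
  rw [← intervalIntegral.integral_eq_sub_of_hasDerivAt (fun x _ ↦ hf x)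
    (hf'.intervalIntegrable _ _)]
  exact sq_intervalIntegral_le hab (hf'.intervalIntegrable _ _)
    ((hf'.pow 2).intervalIntegrable _ _)

lemma integral_sq_mono_interval {g : ℝ → ℝ} {c d : ℝ} (hg : Continuous g) (hca : c ≤ a)
    (hab : a ≤ b) (hbd : b ≤ d) : ∫ x in a..b, g x ^ 2 ≤ ∫ x in c..d, g x ^ 2 :=
  intervalIntegral.integral_mono_interval hca hab hbd (.of_forall fun x ↦ sq_nonneg (g x))
    ((hg.pow 2).intervalIntegrable _ _)

lemma integral_sq_nonneg {g : ℝ → ℝ} (hab : a ≤ b) : 0 ≤ ∫ x in a..b, g x ^ 2 :=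
  intervalIntegral.integral_nonneg hab fun x _ ↦ sq_nonneg (g x)

lemma integral_neg_self_eq_integral_add_comp_neg {E : Type*} [NormedAddCommGroup E]
    [NormedSpace ℝ E] {f : ℝ → E} (hf : Continuous f) :
    ∫ t in -a..a, f t = ∫ t in 0..a, (f t + f (-t)) := by
  rw [intervalIntegral.integral_add (hf.intervalIntegrable _ _)
      (Continuous.intervalIntegrable (by fun_prop) _ _),
    intervalIntegral.integral_comp_neg (f := f), neg_zero, add_comm,
    intervalIntegral.integral_add_adjacent_intervals (hf.intervalIntegrable _ _)
      (hf.intervalIntegrable _ _)]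

lemma integral_sq_const_sub_of_integral_eq_zero {f : ℝ → ℝ} (hf : Continuous f)
    (mean_zero : ∫ s in a..b, f s = 0) (c : ℝ) :
    ∫ s in a..b, (c - f s) ^ 2 = (b - a) * c ^ 2 + ∫ s in a..b, f s ^ 2 := by
  simp_rw [sub_sq]
  rw [intervalIntegral.integral_add, intervalIntegral.integral_sub,
    intervalIntegral.integral_const_mul, mean_zero, intervalIntegral.integral_const, smul_eq_mul,
    mul_zero, sub_zero]
  all_goals exact Continuous.intervalIntegrable (by fun_prop) _ _

lemma integral_two_mul_sub_mul_add_const_mul {R : ℝ → ℝ} (hR : Continuous R) (c d : ℝ) :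
    ∫ s in 0..h, (2 * (h - s) * c + d * R s) = h ^ 2 * c + d * ∫ s in 0..h, R s := by
  rw [intervalIntegral.integral_add, intervalIntegral.integral_const_mul,
    intervalIntegral.integral_mul_const, intervalIntegral.integral_const_mul,
    intervalIntegral.integral_sub, integral_id, intervalIntegral.integral_const, smul_eq_mul]
  · ring
  all_goals exact Continuous.intervalIntegrable (by fun_prop) _ _

lemma integral_sq_le_of_pairwise_sq_sub_le {f R : ℝ → ℝ} (hh : 0 < h) (hf : Continuous f)
    (hR : Continuous R) (mean_zero : ∫ t in 0..h, f t = 0)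
    (hfR : ∀ s ∈ Set.Icc 0 h, ∀ t ∈ Set.Icc 0 h,
      (f t - f s) ^ 2 ≤ 2 * (h - s) * R t + 2 * (h - t) * R s) :
    ∫ t in 0..h, f t ^ 2 ≤ h * ∫ t in 0..h, R t := by
  set A := ∫ t in 0..h, f t ^ 2
  set B := ∫ t in 0..h, R t
  have integrated_in_s : ∀ t ∈ Set.Icc 0 h, h * f t ^ 2 + A ≤ 2 * (h - t) * B + h ^ 2 * R t := by
    intro t ht
    calc h * f t ^ 2 + A = ∫ s in 0..h, (f t - f s) ^ 2 := by
          rw [integral_sq_const_sub_of_integral_eq_zero hf mean_zero, sub_zero]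
      _ ≤ ∫ s in 0..h, (2 * (h - s) * R t + 2 * (h - t) * R s) :=
          intervalIntegral.integral_mono_on hh.le
            (Continuous.intervalIntegrable (by fun_prop) _ _)
            (Continuous.intervalIntegrable (by fun_prop) _ _) fun s hs ↦ hfR s hs t ht
      _ = 2 * (h - t) * B + h ^ 2 * R t := by
          rw [integral_two_mul_sub_mul_add_const_mul hR, add_comm]
  have integrated_in_t : 2 * h * A ≤ 2 * h * (h * B) :=
    calc 2 * h * A = ∫ t in 0..h, (h * f t ^ 2 + A) := by
          rw [intervalIntegral.integral_add, intervalIntegral.integral_const_mul,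
            intervalIntegral.integral_const, smul_eq_mul]
          · ring
          all_goals exact Continuous.intervalIntegrable (by fun_prop) _ _
      _ ≤ ∫ t in 0..h, (2 * (h - t) * B + h ^ 2 * R t) :=
          intervalIntegral.integral_mono_on hh.le
            (Continuous.intervalIntegrable (by fun_prop) _ _)
            (Continuous.intervalIntegrable (by fun_prop) _ _) integrated_in_s
      _ = 2 * h * (h * B) := by rw [integral_two_mul_sub_mul_add_const_mul hR]; ring
  exact le_of_mul_le_mul_left integrated_in_t (by positivity)

end IntervalIntegral

section Gradient

variable {F : Type*} [NormedAddCommGroup F] [InnerProductSpace ℝ F] [CompleteSpace F]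
  {f g : F → ℝ} {x : F}

lemma continuous_gradient_of_contDiff (hf : ContDiff ℝ 1 f) : Continuous (gradient f) :=
  (InnerProductSpace.toDual ℝ F).symm.continuous.comp (hf.continuous_fderiv one_ne_zero)

lemma norm_gradient_add_sq_add_norm_gradient_sub_sq (hf : DifferentiableAt ℝ f x)
    (hg : DifferentiableAt ℝ g x) :
    ‖gradient (f + g) x‖ ^ 2 + ‖gradient (f - g) x‖ ^ 2
      = 2 * (‖gradient f x‖ ^ 2 + ‖gradient g x‖ ^ 2) := by
  have parallelogram := parallelogram_law_with_norm ℝ (gradient f x) (gradient g x)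
  simp only [gradient, fderiv_add hf hg, fderiv_sub hf hg, map_add, map_sub] at parallelogram ⊢
  linarith

lemma norm_gradient_comp_linearIsometryEquiv (w : F → ℝ) (σ : F ≃ₗᵢ[ℝ] F) (x : F) :
    ‖gradient (w ∘ σ) x‖ = ‖gradient w (σ x)‖ := by
  have chain : fderiv ℝ (w ∘ σ) x = (fderiv ℝ w (σ x)).comp (σ : F →L[ℝ] F) :=
    σ.toContinuousLinearEquiv.comp_right_fderiv
  simp only [gradient, LinearIsometryEquiv.norm_map, chain]
  exact ContinuousLinearMap.opNorm_comp_linearIsometryEquiv _ σ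

end Gradient

section FubiniSlices

variable {α β : Type*} [MeasurableSpace α] [MeasurableSpace β] {μ : Measure α} {ν : Measure β}
  [SFinite μ] [SFinite ν] {E : Type*} [NormedAddCommGroup E] [NormedSpace ℝ E]
  {S : Set (α × β)} {f : α × β → E}

lemma setIntegral_prod_eq_integral_slice (hS : MeasurableSet S)
    (hf : IntegrableOn f S (μ.prod ν)) :
    ∫ p in S, f p ∂μ.prod ν = ∫ x, ∫ y in Prod.mk x ⁻¹' S, f (x, y) ∂ν ∂μ := by
  rw [← integral_indicator hS, integral_prod _ (hf.integrable_indicator hS)]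
  congr! 2 with x
  rw [← integral_indicator (measurable_prodMk_left hS)]
  rfl

lemma setIntegral_prod_eq_integral_slice_symm (hS : MeasurableSet S)
    (hf : IntegrableOn f S (μ.prod ν)) :
    ∫ p in S, f p ∂μ.prod ν = ∫ y, ∫ x in (·, y) ⁻¹' S, f (x, y) ∂μ ∂ν := by
  rw [← integral_indicator hS, integral_prod_symm _ (hf.integrable_indicator hS)]
  congr! 2 with y
  rw [← integral_indicator (measurable_prodMk_right hS)]
  rfl

end FubiniSlices

local notation "ℝ²" => EuclideanSpace ℝ (Fin 2)

section Coordinates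

variable {E : Type*} [NormedAddCommGroup E] [NormedSpace ℝ E] {S : Set ℝ²} {F : ℝ² → E}
  {u : ℝ² → ℝ} {x y : ℝ}

lemma measurePreserving_plane_mk :
    MeasurePreserving (fun p : ℝ × ℝ ↦ (!₂[p.1, p.2] : ℝ²)) :=
  (PiLp.volume_preserving_toLp (Fin 2)).comp ((volume_preserving_finTwoArrow ℝ).symm _)

lemma measurableEmbedding_plane_mk :
    MeasurableEmbedding (fun p : ℝ × ℝ ↦ (!₂[p.1, p.2] : ℝ²)) :=
  (MeasurableEquiv.toLp 2 (Fin 2 → ℝ)).measurableEmbedding.comp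
    MeasurableEquiv.finTwoArrow.symm.measurableEmbedding

lemma setIntegral_plane_eq_integral_slice (hS : MeasurableSet S) (hF : IntegrableOn F S) :
    ∫ p in S, F p = ∫ x : ℝ, ∫ y in {y : ℝ | !₂[x, y] ∈ S}, F !₂[x, y] := by
  rw [← measurePreserving_plane_mk.setIntegral_preimage_emb measurableEmbedding_plane_mk,
    Measure.volume_eq_prod,
    setIntegral_prod_eq_integral_slice (measurePreserving_plane_mk.measurable hS)]
  · rfl
  · exact (measurePreserving_plane_mk.integrableOn_comp_preimage measurableEmbedding_plane_mk).2 hF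

lemma setIntegral_plane_eq_integral_slice_symm (hS : MeasurableSet S) (hF : IntegrableOn F S) :
    ∫ p in S, F p = ∫ y : ℝ, ∫ x in {x : ℝ | !₂[x, y] ∈ S}, F !₂[x, y] := by
  rw [← measurePreserving_plane_mk.setIntegral_preimage_emb measurableEmbedding_plane_mk,
    Measure.volume_eq_prod,
    setIntegral_prod_eq_integral_slice_symm (measurePreserving_plane_mk.measurable hS)]
  · rfl
  · exact (measurePreserving_plane_mk.integrableOn_comp_preimage measurableEmbedding_plane_mk).2 hF

lemma fderiv_single_eq_gradient_apply {ι : Type*} [Fintype ι] [DecidableEq ι]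
    (u : EuclideanSpace ℝ ι → ℝ) (p : EuclideanSpace ℝ ι) (i : ι) :
    fderiv ℝ u p (EuclideanSpace.single i 1) = gradient u p i := by
  rw [← inner_gradient_left, EuclideanSpace.inner_single_right]
  simp

lemma hasDerivAt_horizontal (hu : DifferentiableAt ℝ u !₂[x, y]) :
    HasDerivAt (fun x ↦ u !₂[x, y]) (gradient u !₂[x, y] 0) x := by
  have direction : HasDerivAt (fun x : ℝ ↦ (!₂[x, y] : ℝ²)) (EuclideanSpace.single 0 1) x := by
    have line (x : ℝ) : (!₂[x, y] : ℝ²) = !₂[0, y] + x • EuclideanSpace.single 0 1 := by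
      ext i; fin_cases i <;> simp
    rw [funext line]
    simpa only [one_smul] using ((hasDerivAt_id' x).smul_const _).const_add _
  rw [← fderiv_single_eq_gradient_apply]
  exact hu.hasFDerivAt.comp_hasDerivAt x direction

lemma hasDerivAt_vertical (hu : DifferentiableAt ℝ u !₂[x, y]) :
    HasDerivAt (fun y ↦ u !₂[x, y]) (gradient u !₂[x, y] 1) y := by
  have direction : HasDerivAt (fun y : ℝ ↦ (!₂[x, y] : ℝ²)) (EuclideanSpace.single 1 1) y := by
    have line (y : ℝ) : (!₂[x, y] : ℝ²) = !₂[x, 0] + y • EuclideanSpace.single 1 1 := by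
      ext i; fin_cases i <;> simp
    rw [funext line]
    simpa only [one_smul] using ((hasDerivAt_id' y).smul_const _).const_add _
  rw [← fderiv_single_eq_gradient_apply]
  exact hu.hasFDerivAt.comp_hasDerivAt y direction

/-- The reflection `(x, y) ↦ (x, -y)` in the axis of symmetry of the triangle. -/
noncomputable def reflectAxis : ℝ² ≃ₗᵢ[ℝ] ℝ² :=
  LinearIsometryEquiv.piLpCongrRight 2 ![LinearIsometryEquiv.refl ℝ ℝ, LinearIsometryEquiv.neg ℝ]

lemma reflectAxis_mk (x y : ℝ) : reflectAxis !₂[x, y] = !₂[x, -y] := by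
  ext i; fin_cases i <;> simp [reflectAxis]

lemma reflectAxis_reflectAxis (p : ℝ²) : reflectAxis (reflectAxis p) = p := by
  ext i; fin_cases i <;> simp [reflectAxis]

end Coordinates

section Triangle

/-- The open isosceles right triangle `0 < |y| < x < h` with its axis of symmetry removed. -/
def triangle (h : ℝ) : Set ℝ² := {p | 0 < |p 1| ∧ |p 1| < p 0 ∧ p 0 < h}

/-- The upper half of `triangle h`. -/
def halfTriangle (h : ℝ) : Set ℝ² := {p | 0 < p 1 ∧ p 1 < p 0 ∧ p 0 < h}

variable {E : Type*} [NormedAddCommGroup E] {h : ℝ} {F : ℝ² → E}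

lemma measurableSet_halfTriangle : MeasurableSet (halfTriangle h) := by
  unfold halfTriangle
  measurability

lemma halfTriangle_subset_closedBall : halfTriangle h ⊆ Metric.closedBall 0 (2 * h) := by
  rintro p ⟨hp1, hp10, hp0⟩
  rw [mem_closedBall_zero_iff, EuclideanSpace.norm_eq, Fin.sum_univ_two]
  apply Real.sqrt_le_iff.2
  simp only [Real.norm_eq_abs, sq_abs]
  constructor <;> nlinarith

lemma integrableOn_halfTriangle (hF : Continuous F) : IntegrableOn F (halfTriangle h) :=
  (hF.continuousOn.integrableOn_compact (isCompact_closedBall 0 (2 * h))).mono_set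
    halfTriangle_subset_closedBall

variable [NormedSpace ℝ E]

lemma setIntegral_halfTriangle_eq_integral_vertical (hh : 0 ≤ h)
    (hF : IntegrableOn F (halfTriangle h)) :
    ∫ p in halfTriangle h, F p = ∫ x in 0..h, ∫ y in 0..x, F !₂[x, y] := by
  rw [setIntegral_plane_eq_integral_slice measurableSet_halfTriangle hF,
    intervalIntegral.integral_of_le hh, integral_Ioc_eq_integral_Ioo,
    ← setIntegral_eq_integral_of_forall_compl_eq_zero (s := Set.Ioo 0 h)]
  · refine setIntegral_congr_fun measurableSet_Ioo fun x hx ↦ ?_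
    have slice : {y : ℝ | !₂[x, y] ∈ halfTriangle h} = Set.Ioo 0 x := by
      ext y; simp [halfTriangle, hx.2]
    simp only [slice]
    rw [intervalIntegral.integral_of_le hx.1.le, integral_Ioc_eq_integral_Ioo]
  · intro x hx
    have slice : {y : ℝ | !₂[x, y] ∈ halfTriangle h} = ∅ :=
      Set.eq_empty_of_forall_notMem fun y hy ↦ hx ⟨hy.1.trans hy.2.1, hy.2.2⟩
    rw [slice, setIntegral_empty]

lemma setIntegral_halfTriangle_eq_integral_horizontal (hh : 0 ≤ h)
    (hF : IntegrableOn F (halfTriangle h)) :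
    ∫ p in halfTriangle h, F p = ∫ y in 0..h, ∫ x in y..h, F !₂[x, y] := by
  rw [setIntegral_plane_eq_integral_slice_symm measurableSet_halfTriangle hF,
    intervalIntegral.integral_of_le hh, integral_Ioc_eq_integral_Ioo,
    ← setIntegral_eq_integral_of_forall_compl_eq_zero (s := Set.Ioo 0 h)]
  · refine setIntegral_congr_fun measurableSet_Ioo fun y hy ↦ ?_
    have slice : {x : ℝ | !₂[x, y] ∈ halfTriangle h} = Set.Ioo y h := by
      ext x; simp [halfTriangle, hy.1]
    simp only [slice]
    rw [intervalIntegral.integral_of_le hy.2.le, integral_Ioc_eq_integral_Ioo]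
  · intro y hy
    have slice : {x : ℝ | !₂[x, y] ∈ halfTriangle h} = ∅ :=
      Set.eq_empty_of_forall_notMem fun x hx ↦ hy ⟨hx.1, hx.2.1.trans hx.2.2⟩
    rw [slice, setIntegral_empty]

lemma reflectAxis_preimage_halfTriangle :
    reflectAxis ⁻¹' halfTriangle h = {p | 0 < -p 1 ∧ -p 1 < p 0 ∧ p 0 < h} := by
  ext p; simp [halfTriangle, reflectAxis]

lemma triangle_eq_halfTriangle_union :
    triangle h = halfTriangle h ∪ reflectAxis ⁻¹' halfTriangle h := by
  rw [reflectAxis_preimage_halfTriangle]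
  ext p
  simp only [triangle, halfTriangle, Set.mem_union, Set.mem_ofPred_eq]
  grind

lemma disjoint_halfTriangle_reflectAxis_preimage :
    Disjoint (halfTriangle h) (reflectAxis ⁻¹' halfTriangle h) := by
  rw [reflectAxis_preimage_halfTriangle, Set.disjoint_left]
  exact fun p hp hp' ↦ (neg_pos.1 hp'.1).not_gt hp.1

lemma setIntegral_triangle_eq_add_comp_reflectAxis (hF : Continuous F) :
    ∫ p in triangle h, F p = ∫ p in halfTriangle h, (F p + F (reflectAxis p)) := by
  have embedding : MeasurableEmbedding reflectAxis := reflectAxis.toHomeomorph.measurableEmbedding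
  have reflected : ∫ p in reflectAxis ⁻¹' halfTriangle h, F p
      = ∫ p in halfTriangle h, F (reflectAxis p) := by
    simpa only [Function.comp_apply, reflectAxis_reflectAxis] using
      reflectAxis.measurePreserving.setIntegral_preimage_emb embedding (F ∘ reflectAxis)
        (halfTriangle h)
  have integrable : IntegrableOn F (reflectAxis ⁻¹' halfTriangle h) := by
    simpa only [Function.comp_def, reflectAxis_reflectAxis] using
      (reflectAxis.measurePreserving.integrableOn_comp_preimage embedding).2
        (integrableOn_halfTriangle (hF.comp reflectAxis.continuous))
  rw [triangle_eq_halfTriangle_union,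
    setIntegral_union disjoint_halfTriangle_reflectAxis_preimage
      (measurableSet_halfTriangle.preimage embedding.measurable)
      (integrableOn_halfTriangle hF) integrable, reflected]
  exact (integral_add (integrableOn_halfTriangle hF)
    (integrableOn_halfTriangle (hF.comp reflectAxis.continuous))).symm

end Triangle

section FoldedPath

/-- The even extension of `u` across the diagonal of the quadrant. For fixed `t ∈ [0, h]`, the
curve `s ↦ (max s t, min s t)`, `s ∈ [0, h]`, runs at unit speed from `(t, 0)` up to the diagonal
and then right to the hypotenuse point `(h, t)`. -/
def diagonalFold (u : ℝ² → ℝ) (s t : ℝ) : ℝ := u !₂[max s t, min s t]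

/-- The integral over `s ∈ [0, h]` of the squared `s`-derivative of `diagonalFold u s t`. -/
noncomputable def pathEnergy (h : ℝ) (u : ℝ² → ℝ) (t : ℝ) : ℝ :=
  (∫ y in 0..t, gradient u !₂[t, y] 1 ^ 2) + ∫ x in t..h, gradient u !₂[x, t] 0 ^ 2

variable {h s t : ℝ} {u : ℝ² → ℝ}

lemma diagonalFold_comm (u : ℝ² → ℝ) (s t : ℝ) : diagonalFold u s t = diagonalFold u t s := by
  simp only [diagonalFold, max_comm s t, min_comm s t]

lemma diagonalFold_of_ge (u : ℝ² → ℝ) (hts : t ≤ s) : diagonalFold u s t = u !₂[s, t] := by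
  rw [diagonalFold, max_eq_left hts, min_eq_right hts]

lemma diagonalFold_of_le (u : ℝ² → ℝ) (hst : s ≤ t) : diagonalFold u s t = u !₂[t, s] := by
  rw [diagonalFold_comm, diagonalFold_of_ge u hst]

lemma continuous_integral_sq_gradient_vertical (hu : ContDiff ℝ 1 u) :
    Continuous fun t : ℝ ↦ ∫ y in 0..t, gradient u !₂[t, y] 1 ^ 2 := by
  have hgrad := continuous_gradient_of_contDiff hu
  exact intervalIntegral.continuous_parametric_intervalIntegral_of_continuous (by fun_prop)
    continuous_id

lemma continuous_integral_sq_gradient_horizontal (hu : ContDiff ℝ 1 u) :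
    Continuous fun t : ℝ ↦ ∫ x in t..h, gradient u !₂[x, t] 0 ^ 2 := by
  have hgrad := continuous_gradient_of_contDiff hu
  simp_rw [intervalIntegral.integral_symm h]
  exact (intervalIntegral.continuous_parametric_intervalIntegral_of_continuous (by fun_prop)
    continuous_id).neg

lemma continuous_pathEnergy (hu : ContDiff ℝ 1 u) : Continuous (pathEnergy h u) :=
  (continuous_integral_sq_gradient_vertical hu).add (continuous_integral_sq_gradient_horizontal hu)

lemma setIntegral_halfTriangle_norm_gradient_sq (hh : 0 ≤ h) (hu : ContDiff ℝ 1 u) :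
    ∫ p in halfTriangle h, ‖gradient u p‖ ^ 2 = ∫ t in 0..h, pathEnergy h u t := by
  have hgrad := continuous_gradient_of_contDiff hu
  have integrable (i : Fin 2) : IntegrableOn (fun p ↦ gradient u p i ^ 2) (halfTriangle h) :=
    integrableOn_halfTriangle (by fun_prop)
  calc ∫ p in halfTriangle h, ‖gradient u p‖ ^ 2
      = (∫ p in halfTriangle h, gradient u p 1 ^ 2)
          + ∫ p in halfTriangle h, gradient u p 0 ^ 2 := by
        rw [← integral_add (integrable 1) (integrable 0)]
        simp only [EuclideanSpace.real_norm_sq_eq, Fin.sum_univ_two, add_comm]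
    _ = (∫ x in 0..h, ∫ y in 0..x, gradient u !₂[x, y] 1 ^ 2)
          + ∫ y in 0..h, ∫ x in y..h, gradient u !₂[x, y] 0 ^ 2 := by
        rw [setIntegral_halfTriangle_eq_integral_vertical hh (integrable 1),
          setIntegral_halfTriangle_eq_integral_horizontal hh (integrable 0)]
    _ = ∫ t in 0..h, pathEnergy h u t :=
        (intervalIntegral.integral_add
          ((continuous_integral_sq_gradient_vertical hu).intervalIntegrable _ _)
          ((continuous_integral_sq_gradient_horizontal hu).intervalIntegrable _ _)).symm

lemma sq_horizontal_sub_le {a b : ℝ} (hu : ContDiff ℝ 1 u) (hab : a ≤ b) (y : ℝ) :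
    (u !₂[b, y] - u !₂[a, y]) ^ 2 ≤ (b - a) * ∫ x in a..b, gradient u !₂[x, y] 0 ^ 2 := by
  have hgrad := continuous_gradient_of_contDiff hu
  exact sq_sub_le_mul_integral_sq_deriv hab
    (fun x ↦ hasDerivAt_horizontal (hu.differentiable one_ne_zero _)) (by fun_prop)

lemma sq_vertical_sub_le {a b : ℝ} (hu : ContDiff ℝ 1 u) (hab : a ≤ b) (x : ℝ) :
    (u !₂[x, b] - u !₂[x, a]) ^ 2 ≤ (b - a) * ∫ y in a..b, gradient u !₂[x, y] 1 ^ 2 := by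
  have hgrad := continuous_gradient_of_contDiff hu
  exact sq_sub_le_mul_integral_sq_deriv hab
    (fun y ↦ hasDerivAt_vertical (hu.differentiable one_ne_zero _)) (by fun_prop)

lemma sq_diagonalFold_sub_le (hu : ContDiff ℝ 1 u) (hs : s ∈ Set.Icc 0 h)
    (ht : t ∈ Set.Icc 0 h) :
    (diagonalFold u h t - diagonalFold u s t) ^ 2 ≤ (h - s) * pathEnergy h u t := by
  have hgrad := continuous_gradient_of_contDiff hu
  rw [diagonalFold_of_ge u ht.2]
  rcases le_total t s with hts | hst
  · rw [diagonalFold_of_ge u hts]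
    calc (u !₂[h, t] - u !₂[s, t]) ^ 2
        ≤ (h - s) * ∫ x in s..h, gradient u !₂[x, t] 0 ^ 2 := sq_horizontal_sub_le hu hs.2 t
      _ ≤ (h - s) * ∫ x in t..h, gradient u !₂[x, t] 0 ^ 2 :=
          mul_le_mul_of_nonneg_left (integral_sq_mono_interval (by fun_prop) hts hs.2 le_rfl)
            (sub_nonneg.2 hs.2)
      _ ≤ (h - s) * pathEnergy h u t :=
          mul_le_mul_of_nonneg_left (le_add_of_nonneg_left (integral_sq_nonneg ht.1))
            (sub_nonneg.2 hs.2)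
  · rw [diagonalFold_of_le u hst]
    calc (u !₂[h, t] - u !₂[t, s]) ^ 2
        = ((u !₂[t, t] - u !₂[t, s]) + (u !₂[h, t] - u !₂[t, t])) ^ 2 := by ring
      _ ≤ ((t - s) + (h - t)) * ((∫ y in s..t, gradient u !₂[t, y] 1 ^ 2)
            + ∫ x in t..h, gradient u !₂[x, t] 0 ^ 2) :=
          sq_add_le_of_sq_le_mul (sub_nonneg.2 hst) (sub_nonneg.2 ht.2) (integral_sq_nonneg hst)
            (integral_sq_nonneg ht.2) (sq_vertical_sub_le hu hst t)
            (sq_horizontal_sub_le hu ht.2 t)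
      _ = (h - s) * ((∫ y in s..t, gradient u !₂[t, y] 1 ^ 2)
            + ∫ x in t..h, gradient u !₂[x, t] 0 ^ 2) := by ring
      _ ≤ (h - s) * pathEnergy h u t :=
          mul_le_mul_of_nonneg_left (add_le_add_left
            (integral_sq_mono_interval (by fun_prop) hs.1 hst le_rfl) _) (sub_nonneg.2 hs.2)

lemma sq_hypotenuse_sub_le (hu : ContDiff ℝ 1 u) (hs : s ∈ Set.Icc 0 h)
    (ht : t ∈ Set.Icc 0 h) :
    (u !₂[h, t] - u !₂[h, s]) ^ 2
      ≤ 2 * (h - s) * pathEnergy h u t + 2 * (h - t) * pathEnergy h u s := by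
  have along_t := sq_diagonalFold_sub_le hu hs ht
  have along_s := sq_diagonalFold_sub_le hu ht hs
  rw [diagonalFold_of_ge u ht.2] at along_t
  rw [diagonalFold_of_ge u hs.2, diagonalFold_comm] at along_s
  calc (u !₂[h, t] - u !₂[h, s]) ^ 2
      = ((u !₂[h, t] - diagonalFold u s t) + (diagonalFold u s t - u !₂[h, s])) ^ 2 := by ring
    _ ≤ 2 * ((u !₂[h, t] - diagonalFold u s t) ^ 2 + (diagonalFold u s t - u !₂[h, s]) ^ 2) :=
        add_sq_le
    _ ≤ 2 * (h - s) * pathEnergy h u t + 2 * (h - t) * pathEnergy h u s := by linarith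

lemma integral_sq_le_of_integral_eq_zero (hh : 0 < h) (hu : ContDiff ℝ 1 u)
    (mean_zero : ∫ t in 0..h, u !₂[h, t] = 0) :
    ∫ t in 0..h, u !₂[h, t] ^ 2 ≤ h * ∫ p in halfTriangle h, ‖gradient u p‖ ^ 2 := by
  have hcont := hu.continuous
  rw [setIntegral_halfTriangle_norm_gradient_sq hh.le hu]
  exact integral_sq_le_of_pairwise_sq_sub_le hh (by fun_prop) (continuous_pathEnergy hu) mean_zero
    fun s hs t ht ↦ sq_hypotenuse_sub_le hu hs ht

lemma integral_sq_le_of_eq_zero_on_axis (hh : 0 ≤ h) (hu : ContDiff ℝ 1 u)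
    (axis_zero : ∀ t ∈ Set.Icc 0 h, u !₂[t, 0] = 0) :
    ∫ t in 0..h, u !₂[h, t] ^ 2 ≤ h * ∫ p in halfTriangle h, ‖gradient u p‖ ^ 2 := by
  have hcont := hu.continuous
  rw [setIntegral_halfTriangle_norm_gradient_sq hh hu, ← intervalIntegral.integral_const_mul]
  refine intervalIntegral.integral_mono_on hh (Continuous.intervalIntegrable (by fun_prop) _ _)
    (((continuous_pathEnergy hu).const_mul h).intervalIntegrable _ _) fun t ht ↦ ?_
  simpa only [diagonalFold_of_ge u ht.2, diagonalFold_of_le u ht.1, axis_zero t ht, sub_zero]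
    using sq_diagonalFold_sub_le hu (Set.left_mem_Icc.2 hh) ht

end FoldedPath

section Parity

variable {h : ℝ} {w : ℝ² → ℝ}

lemma integral_neg_self_sq_eq_even_add_odd (hw : Continuous w) :
    ∫ t in -h..h, w !₂[h, t] ^ 2 = ((∫ t in 0..h, (w + w ∘ reflectAxis) !₂[h, t] ^ 2)
      + ∫ t in 0..h, (w - w ∘ reflectAxis) !₂[h, t] ^ 2) / 2 := by
  simp only [Pi.add_apply, Pi.sub_apply, Function.comp_apply, reflectAxis_mk]
  rw [integral_neg_self_eq_integral_add_comp_neg (by fun_prop), ← intervalIntegral.integral_add,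
    ← intervalIntegral.integral_div]
  · congr with t
    ring
  all_goals exact Continuous.intervalIntegrable (by fun_prop) _ _

lemma setIntegral_triangle_norm_gradient_sq (hw : ContDiff ℝ 1 w) :
    ∫ p in triangle h, ‖gradient w p‖ ^ 2
      = ((∫ p in halfTriangle h, ‖gradient (w + w ∘ reflectAxis) p‖ ^ 2)
        + ∫ p in halfTriangle h, ‖gradient (w - w ∘ reflectAxis) p‖ ^ 2) / 2 := by
  have hw' : ContDiff ℝ 1 (w ∘ reflectAxis) := hw.comp reflectAxis.contDiff
  have integrable {u : ℝ² → ℝ} (hu : ContDiff ℝ 1 u) :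
      IntegrableOn (fun p ↦ ‖gradient u p‖ ^ 2) (halfTriangle h) :=
    integrableOn_halfTriangle ((continuous_gradient_of_contDiff hu).norm.pow 2)
  rw [setIntegral_triangle_eq_add_comp_reflectAxis (F := fun p ↦ ‖gradient w p‖ ^ 2)
      ((continuous_gradient_of_contDiff hw).norm.pow 2),
    ← integral_add (integrable (u := w + w ∘ reflectAxis) (hw.add hw'))
      (integrable (u := w - w ∘ reflectAxis) (hw.sub hw')), ← integral_div]
  congr with p
  rw [norm_gradient_add_sq_add_norm_gradient_sub_sq (hw.differentiable one_ne_zero p)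
    (hw'.differentiable one_ne_zero p), norm_gradient_comp_linearIsometryEquiv]
  ring

lemma integral_hypotenuse_sq_le (hh : 0 < h) (hw : ContDiff ℝ 1 w)
    (mean_zero : ∫ t in -h..h, w !₂[h, t] = 0) :
    ∫ t in -h..h, w !₂[h, t] ^ 2 ≤ h * ∫ p in triangle h, ‖gradient w p‖ ^ 2 := by
  have hcont := hw.continuous
  have hw' : ContDiff ℝ 1 (w ∘ reflectAxis) := hw.comp reflectAxis.contDiff
  have even_part := integral_sq_le_of_integral_eq_zero (u := w + w ∘ reflectAxis) hh
    (hw.add hw') (by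
    simpa only [Pi.add_apply, Function.comp_apply, reflectAxis_mk, mean_zero] using
      (integral_neg_self_eq_integral_add_comp_neg (a := h) (f := fun t ↦ w !₂[h, t])
        (by fun_prop)).symm)
  have odd_part := integral_sq_le_of_eq_zero_on_axis (u := w - w ∘ reflectAxis) hh.le
    (hw.sub hw') (by simp [reflectAxis_mk])
  rw [integral_neg_self_sq_eq_even_add_odd hcont, setIntegral_triangle_norm_gradient_sq hw]
  linarith

end Parity

section Extremal

/-- The extremal function `(x, y) ↦ x * y`: it is harmonic, its normal derivative vanishes on the
legs `|y| = x` and equals `1 / h` times the function itself on the hypotenuse `x = h`. -/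
def saddle (p : ℝ²) : ℝ := p 0 * p 1

variable {h : ℝ}

lemma contDiff_saddle : ContDiff ℝ 1 saddle := by
  unfold saddle
  fun_prop

lemma gradient_saddle (p : ℝ²) : gradient saddle p = !₂[p 1, p 0] := by
  have product_rule : HasFDerivAt saddle
      (p 0 • EuclideanSpace.proj (𝕜 := ℝ) 1 + p 1 • EuclideanSpace.proj (𝕜 := ℝ) 0) p :=
    (EuclideanSpace.proj (𝕜 := ℝ) 0).hasFDerivAt.mul (EuclideanSpace.proj (𝕜 := ℝ) 1).hasFDerivAt
  ext i
  rw [← fderiv_single_eq_gradient_apply, product_rule.fderiv]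
  fin_cases i <;> simp

lemma saddle_mk (x y : ℝ) : saddle !₂[x, y] = x * y := rfl

lemma pathEnergy_saddle (t : ℝ) : pathEnergy h saddle t = h * t ^ 2 := by
  simp only [pathEnergy, gradient_saddle, Matrix.cons_val_zero, Matrix.cons_val_one,
    Matrix.cons_val_fin_one, intervalIntegral.integral_const, smul_eq_mul]
  ring

lemma integral_saddle : ∫ t in -h..h, saddle !₂[h, t] = 0 := by
  simp only [saddle_mk]
  rw [intervalIntegral.integral_const_mul, integral_id]
  ring

lemma integral_saddle_sq : ∫ t in -h..h, saddle !₂[h, t] ^ 2 = h * (2 * h ^ 4 / 3) := by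
  simp only [saddle_mk, mul_pow, intervalIntegral.integral_const_mul, integral_pow]
  push_cast
  ring

lemma setIntegral_triangle_norm_gradient_saddle_sq (hh : 0 ≤ h) :
    ∫ p in triangle h, ‖gradient saddle p‖ ^ 2 = 2 * h ^ 4 / 3 := by
  have reflect (p : ℝ²) : ‖gradient saddle (reflectAxis p)‖ ^ 2 = ‖gradient saddle p‖ ^ 2 := by
    simp [gradient_saddle, EuclideanSpace.real_norm_sq_eq, reflectAxis]
  calc ∫ p in triangle h, ‖gradient saddle p‖ ^ 2
      = ∫ p in halfTriangle h, (‖gradient saddle p‖ ^ 2 + ‖gradient saddle (reflectAxis p)‖ ^ 2) :=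
        setIntegral_triangle_eq_add_comp_reflectAxis
          ((continuous_gradient_of_contDiff contDiff_saddle).norm.pow 2)
    _ = 2 * ∫ t in 0..h, pathEnergy h saddle t := by
        simp_rw [reflect, ← two_mul]
        rw [integral_const_mul, setIntegral_halfTriangle_norm_gradient_sq hh contDiff_saddle]
    _ = 2 * h ^ 4 / 3 := by
        simp only [pathEnergy_saddle, intervalIntegral.integral_const_mul, integral_pow]
        push_cast
        ring

end Extremal

/-- The sharp constant `C₂(Ω,Γ)` in `‖w‖_{L²(Γ)} ≤ C₂ ‖∇w‖_{L²(Ω)}` for functions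
with zero mean trace on `Γ`, where `Ω = {0 < |x₂| < x₁ < h}` is an isosceles right
triangle (with hypotenuse of length `2h`) and `Γ = {x₁ = h, x₂ ∈ [−h,h]}` is the
hypotenuse, equals `h^(1/2)`. -/
theorem triangle_hypotenuse_C2 (h : ℝ) (hh : 0 < h) :
    IsLeast {C : ℝ |
      ∀ w : EuclideanSpace ℝ (Fin 2) → ℝ, ContDiff ℝ 1 w →
        (∫ t in (-h)..h, w !₂[h, t]) = 0 →
        Real.sqrt (∫ t in (-h)..h, (w !₂[h, t]) ^ 2) ≤
          C * Real.sqrt (∫ x in {x : EuclideanSpace ℝ (Fin 2) |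
            0 < |x 1| ∧ |x 1| < x 0 ∧ x 0 < h}, ‖gradient w x‖ ^ 2)}
      (Real.sqrt h) := by
  constructor
  · intro w hw mean_zero
    rw [← Real.sqrt_mul hh.le]
    exact Real.sqrt_le_sqrt (integral_hypotenuse_sq_le hh hw mean_zero)
  · intro C hC
    have bound : √(h * (2 * h ^ 4 / 3)) ≤ C * √(2 * h ^ 4 / 3) := by
      rw [← integral_saddle_sq, ← setIntegral_triangle_norm_gradient_saddle_sq hh.le]
      exact hC saddle contDiff_saddle integral_saddle
    rw [Real.sqrt_mul hh.le] at bound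
    exact le_of_mul_le_mul_right bound (Real.sqrt_pos.2 (by positivity))
end

section
/- For α > 0 let z₀(α) be the unique root of tanh(z/α)·tan(zα) = 1 with 0 < z₀(α)·α < π/2. Then the function α ↦ α·z₀(α)·tanh(z₀(α)/α) is strictly decreasing on (0, +∞); consequently the function f(α) = z₀(α)·tanh(z₀(α)/α) is strictly decreasing on (0, +∞). -/
open Real

/-!
Put `θ = z₀(α)·α`, so that the equation reads `tanh(θ/α²) = cot θ`. If `θ` failed to increase with
`α`, then `θ/α²` would decrease strictly while `tan θ` did not increase, and the product
`tanh(θ/α²)·tan θ` could not remain equal to `1`. Hence `θ` is strictly increasing in `α`, and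
`α·z₀(α)·tanh(z₀(α)/α) = θ·cot θ`, where `θ ↦ θ·cot θ` is strictly decreasing since its derivative
is `(sin 2θ - 2θ) / (2·sin² θ)`.
-/

theorem tanh_strictMono : StrictMono tanh := fun x y hxy => by
  have tanh_mem (t : ℝ) : tanh t ∈ Set.Ioo (-1) 1 := ⟨neg_one_lt_tanh t, tanh_lt_one t⟩
  rwa [← artanh_lt_artanh_iff (tanh_mem x) (tanh_mem y), artanh_tanh, artanh_tanh]

theorem hasDerivAt_cot {x : ℝ} (hx : sin x ≠ 0) : HasDerivAt cot (-(1 / sin x ^ 2)) x := by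
  have cot_eq : cot = fun y => cos y / sin y := funext cot_eq_cos_div_sin
  rw [cot_eq]
  refine ((hasDerivAt_cos x).fun_div (hasDerivAt_sin x) hx).congr_deriv ?_
  rw [← sin_sq_add_cos_sq x]
  ring

theorem cot_lt_div_sin_sq {x : ℝ} (hx : 0 < x) (hsin : sin x ≠ 0) : cot x < x / sin x ^ 2 := by
  have sin_mul_cos_lt : sin x * cos x < x := by
    have sin_two_mul_lt := sin_lt (mul_pos two_pos hx)
    rw [sin_two_mul] at sin_two_mul_lt
    linarith
  calc cot x = sin x * cos x / sin x ^ 2 := by rw [cot_eq_cos_div_sin]; field_simp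
    _ < x / sin x ^ 2 := by gcongr

theorem strictAntiOn_mul_cot : StrictAntiOn (fun x => x * cot x) (Set.Ioo 0 π) := by
  have sin_ne_zero {x : ℝ} (hx : x ∈ Set.Ioo 0 π) : sin x ≠ 0 := (sin_pos_of_mem_Ioo hx).ne'
  have hderiv {x : ℝ} (hx : x ∈ Set.Ioo 0 π) :
      HasDerivAt (fun x => x * cot x) (cot x - x / sin x ^ 2) x :=
    ((hasDerivAt_id' x).fun_mul (hasDerivAt_cot (sin_ne_zero hx))).congr_deriv (by ring)
  refine strictAntiOn_of_deriv_neg (convex_Ioo 0 π)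
    (fun x hx => (hderiv hx).continuousAt.continuousWithinAt) fun x hx => ?_
  rw [interior_Ioo] at hx
  rw [(hderiv hx).deriv]
  exact sub_neg.2 (cot_lt_div_sin_sq hx.1 (sin_ne_zero hx))

theorem strictAntiOn_of_id_mul {R : Type*} [Semiring R] [LinearOrder R] [IsStrictOrderedRing R]
    {s : Set R} {f : R → R} (hs : s ⊆ Set.Ioi 0) (hf : ∀ x ∈ s, 0 ≤ f x)
    (h : StrictAntiOn (fun x => x * f x) s) : StrictAntiOn f s := by
  intro x hx y hy hxy
  refine lt_of_mul_lt_mul_left ?_ (hs hy).le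
  calc y * f y < x * f x := h hx hy hxy
    _ ≤ y * f x := mul_le_mul_of_nonneg_right hxy.le (hf x hx)

/-- `z` is a root of `tanh (z / α) * tan (z * α) = 1` with `z * α` in the first quadrant; for
`α > 0` this characterises the number `z₀ α`. -/
structure IsTanhTanRoot (α z : ℝ) : Prop where
  mul_pos : 0 < z * α
  mul_lt_pi_div_two : z * α < π / 2
  tanh_mul_tan : tanh (z / α) * tan (z * α) = 1

namespace IsTanhTanRoot

variable {α β z w : ℝ}

theorem tan_pos (h : IsTanhTanRoot α z) : 0 < tan (z * α) :=
  tan_pos_of_pos_of_lt_pi_div_two h.mul_pos h.mul_lt_pi_div_two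

theorem tanh_eq_cot (h : IsTanhTanRoot α z) : tanh (z / α) = cot (z * α) := by
  rw [← tan_inv_eq_cot]
  exact eq_inv_of_mul_eq_one_left h.tanh_mul_tan

theorem tanh_pos (h : IsTanhTanRoot α z) : 0 < tanh (z / α) := by
  rw [h.tanh_eq_cot, ← tan_inv_eq_cot]
  exact inv_pos.2 h.tan_pos

theorem mul_lt_mul (hz : IsTanhTanRoot α z) (hw : IsTanhTanRoot β w) (hα : 0 < α) (hαβ : α < β) :
    z * α < w * β := by
  by_contra! hle
  have div_lt : w / β < z / α :=
    calc w / β = w * β / β ^ 2 := by have := hα.trans hαβ; field_simp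
      _ ≤ z * α / β ^ 2 := by gcongr
      _ < z * α / α ^ 2 := by have := hz.mul_pos; gcongr
      _ = z / α := by field_simp
  have tan_le : tan (w * β) ≤ tan (z * α) :=
    strictMonoOn_tan.monotoneOn ⟨by linarith [pi_pos, hw.mul_pos], hw.mul_lt_pi_div_two⟩
      ⟨by linarith [pi_pos, hz.mul_pos], hz.mul_lt_pi_div_two⟩ hle
  have one_lt_one : (1 : ℝ) < 1 :=
    calc 1 = tanh (w / β) * tan (w * β) := hw.tanh_mul_tan.symm
      _ < tanh (z / α) * tan (z * α) :=
        mul_lt_mul_of_lt_of_le_of_nonneg_of_pos (tanh_strictMono div_lt) tan_le hw.tanh_pos.le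
          hz.tan_pos
      _ = 1 := hz.tanh_mul_tan
  exact one_lt_one.false

theorem mul_mul_tanh_lt (hz : IsTanhTanRoot α z) (hw : IsTanhTanRoot β w) (hα : 0 < α)
    (hαβ : α < β) : β * (w * tanh (w / β)) < α * (z * tanh (z / α)) := by
  have mem_Ioo {γ v : ℝ} (h : IsTanhTanRoot γ v) : v * γ ∈ Set.Ioo 0 π :=
    ⟨h.mul_pos, by linarith [h.mul_lt_pi_div_two, pi_pos]⟩
  have mul_cot_lt := strictAntiOn_mul_cot (mem_Ioo hz) (mem_Ioo hw) (hz.mul_lt_mul hw hα hαβ)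
  rw [hz.tanh_eq_cot, hw.tanh_eq_cot]
  linarith

end IsTanhTanRoot

/-- For `α > 0` let `z₀(α)` be the unique root of `tanh(z/α)·tan(zα) = 1` with
`0 < z₀(α)·α < π/2`. Then `α ↦ α·z₀(α)·tanh(z₀(α)/α)` is strictly decreasing on
`(0,∞)`; consequently `f(α) = z₀(α)·tanh(z₀(α)/α)` is strictly decreasing on
`(0,∞)`. -/
theorem z0_tanh_strictAnti (z₀ : ℝ → ℝ)
    (hz₀ : ∀ α : ℝ, 0 < α →
      (0 < z₀ α * α ∧ z₀ α * α < π / 2 ∧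
        Real.tanh (z₀ α / α) * Real.tan (z₀ α * α) = 1) ∧
      (∀ z : ℝ, 0 < z * α → z * α < π / 2 →
        Real.tanh (z / α) * Real.tan (z * α) = 1 → z = z₀ α)) :
    StrictAntiOn (fun α : ℝ => α * z₀ α * Real.tanh (z₀ α / α)) (Set.Ioi 0) ∧
    StrictAntiOn (fun α : ℝ => z₀ α * Real.tanh (z₀ α / α)) (Set.Ioi 0) := by
  have isRoot {α : ℝ} (hα : 0 < α) : IsTanhTanRoot α (z₀ α) :=
    let ⟨hpos, hlt, heq⟩ := (hz₀ α hα).1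
    ⟨hpos, hlt, heq⟩
  have id_mul_strictAnti :
      StrictAntiOn (fun α => α * (z₀ α * tanh (z₀ α / α))) (Set.Ioi 0) :=
    fun _ hα _ hβ hαβ => (isRoot hα).mul_mul_tanh_lt (isRoot hβ) hα hαβ
  have nonneg : ∀ α ∈ Set.Ioi (0 : ℝ), 0 ≤ z₀ α * tanh (z₀ α / α) := fun α hα =>
    mul_nonneg (pos_of_mul_pos_left (isRoot hα).mul_pos (le_of_lt hα)).le (isRoot hα).tanh_pos.le
  exact ⟨by simpa only [mul_assoc] using id_mul_strictAnti,
    strictAntiOn_of_id_mul subset_rfl nonneg id_mul_strictAnti⟩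
end
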